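/- Let G be a Grothendieck category, W an injective cogenerator of G, and T a classical tilting object of G; set R = End_G(T). Then the cohomologies of the complex RHom_G(T,W) ∈ D(R) vanish in all degrees different from zero, so RHom_G(T,W) ≅ C in D(R) for some right R-module C. If moreover there exists n ≥ 0 such that Ext^{n+1}_G(T,−) ≡ 0, then C is a big n-cotilting R-module. -/

import Mathlib

/-!
Statement 1: Let `G` be a Grothendieck category, `W` an injective cogenerator, `T` a classical
tilting object, `R = End_G(T)`.  Then the derived equivalence `D(G) ≌ D(Mod-R)` (any triangle
equivalence sending `T` to `R`) sends `W` to a complex with cohomology concentrated in degree `0`,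
hence isomorphic to a module `C`; and if `Ext^{n+1}_G(T,-) ≡ 0` then `C` is big `n`-cotilting.
(Right `R`-modules are formalized as `ModuleCat R` over an arbitrary ring `R`.)
-/

universe e w₂ w v₂ u₂ v u

open CategoryTheory Category Limits Pretriangulated

namespace PaperStmt

/-- A triangle equivalence: an equivalence of categories commuting with the shift and
preserving distinguished triangles. -/
structure TriangleEquivalenceData (D₁ : Type u) (D₂ : Type u₂)
    [Category.{v} D₁] [Category.{v₂} D₂]
    [HasZeroObject D₁] [HasZeroObject D₂] [Preadditive D₁] [Preadditive D₂]
    [HasShift D₁ ℤ] [HasShift D₂ ℤ]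
    [∀ n : ℤ, (shiftFunctor D₁ n).Additive] [∀ n : ℤ, (shiftFunctor D₂ n).Additive]
    [Pretriangulated D₁] [Pretriangulated D₂] where
  functor : D₁ ⥤ D₂
  commShift : functor.CommShift ℤ
  isTriangulated : letI := commShift; functor.IsTriangulated
  isEquivalence : functor.IsEquivalence

variable {R : Type v₂} [Ring R]

/-- `M` belongs to `Prod C`: it is a direct summand of a product of copies of `C`. -/
def InProdOf (C M : ModuleCat.{v₂} R) : Prop :=
  ∃ (ι : Type v₂) (s : M ⟶ ∏ᶜ (fun _ : ι => C)) (r : (∏ᶜ (fun _ : ι => C)) ⟶ M),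
    s ≫ r = 𝟙 M

/-- `C` has injective dimension at most `n`: there is an exact sequence
`0 → C → E⁰ → ⋯ → Eⁿ → 0` with all `Eⁱ` injective. -/
def InjDimLE (C : ModuleCat.{v₂} R) (n : ℕ) : Prop :=
  ∃ S : ComposableArrows (ModuleCat.{v₂} R) (n + 3),
    S.Exact ∧ IsZero (S.obj 0) ∧ IsZero (S.obj (Fin.last (n + 3))) ∧
    Nonempty (S.obj ⟨1, by omega⟩ ≅ C) ∧
    ∀ (i : ℕ) (_ : 2 ≤ i) (_ : i ≤ n + 2), Injective (S.obj ⟨i, by omega⟩)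

/-- `C` is a big `n`-cotilting module: (BC1) it has injective dimension at most `n`;
(BC2) `Ext^j(Cᴵ, C) = 0` for all `j > 0` and all sets `I`; (BC3) there is an exact sequence
`0 → C_r → ⋯ → C_0 → Q → 0` with `Q` an injective cogenerator and all `C_i ∈ Prod C`. -/
def IsBigNCotilting [HasExt.{e} (ModuleCat.{v₂} R)] (n : ℕ) (C : ModuleCat.{v₂} R) : Prop :=
  InjDimLE C n ∧
  (∀ (ι : Type v₂) (j : ℕ), 0 < j →
      Subsingleton (Abelian.Ext (∏ᶜ (fun _ : ι => C)) C j)) ∧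
  (∃ (r : ℕ) (S : ComposableArrows (ModuleCat.{v₂} R) (r + 3)),
    S.Exact ∧ IsZero (S.obj 0) ∧ IsZero (S.obj (Fin.last (r + 3))) ∧
    (∀ (i : ℕ) (_ : 1 ≤ i) (_ : i ≤ r + 1), InProdOf C (S.obj ⟨i, by omega⟩)) ∧
    Injective (S.obj ⟨r + 2, by omega⟩) ∧ IsCoseparator (S.obj ⟨r + 2, by omega⟩))

end PaperStmt

open PaperStmt DerivedCategory

/-!
Let `F` be the equivalence `D(G) ≌ D(Mod-R)`. Since `F T ≅ R`, the module `Hⁱ (F Y)` vanishes as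
soon as `Hom (T[-i], Y) = 0`. For `Y = W` injective this holds whenever `i ≠ 0`, so `F W` is a
module `C`. Assume now `Ext^{n+1}(T, -) = 0`.

* If `F Y` is a module `M`, then `F` sends the stalk complexes in degrees below `-n` to `D^{≤ -1}`,
  so they admit no nonzero morphism to `Y` and hence `Y ∈ D^{≥ -n}`. As `W` is injective,
  `Ext^j (M, C) = Hom (Y, W[j])` vanishes when `H^{-j} (Y) = 0`, in particular for `j = n + 1`.
* If `F Y` is a power of `C`, a morphism from a stalk complex in a negative degree to `Y` is
  determined by its components, which are zero because `W` is injective. Hence `Y ∈ D^{≥ 0}` and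
  `Ext^j (M, C) = 0` for all `j > 0`.
* If `F Y` is an injective cogenerator, then `Hom (A[-i], Y) = 0` for all `i > 0` and all `A`.
  The fiber of a suitable approximation `I ⟶ Y` by an injective object `I` inherits this property
  and lies in degrees `≥ -n + 1`, so that after `n` steps only an injective object is left. Each
  `F I` is a module, and it is a direct summand of a power of `C` because `W` is a cogenerator.
-/

universe t

namespace BigCotilting

section StalkComplexes

variable {C : Type u} [Category.{v} C] [Abelian C]

/-- The identification of the degree `i` term of a stalk complex in degree `i`, stated for
`CochainComplex.singleFunctor`, which does not unfold to `HomologicalComplex.single` reducibly. -/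
noncomputable def singleXIso (i : ℤ) (A : C) :
    ((CochainComplex.singleFunctor C i).obj A).X i ≅ A :=
  HomologicalComplex.singleObjXSelf (.up ℤ) i A

theorem singleFunctor_map_f (i : ℤ) {A B : C} (f : A ⟶ B) :
    ((CochainComplex.singleFunctor C i).map f).f i =
      (singleXIso i A).hom ≫ f ≫ (singleXIso i B).inv :=
  HomologicalComplex.single_map_f_self _ _ _

@[simp]
theorem singleFunctor_obj_d (i j k : ℤ) (A : C) :
    ((CochainComplex.singleFunctor C i).obj A).d j k = 0 :=
  HomologicalComplex.single_obj_d _ _ _ _ _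

/-- The inclusion of the cycles of degree `i`, as a morphism of complexes from their stalk
complex. -/
noncomputable def singleCyclesι (K : CochainComplex C ℤ) (i : ℤ) :
    (CochainComplex.singleFunctor C i).obj (K.cycles i) ⟶ K :=
  HomologicalComplex.mkHomFromSingle (K.iCycles i) fun k _ ↦ K.iCycles_d i k

theorem singleCyclesι_f (K : CochainComplex C ℤ) (i : ℤ) :
    (singleCyclesι K i).f i = (singleXIso i (K.cycles i)).hom ≫ K.iCycles i :=
  HomologicalComplex.mkHomFromSingle_f _ _

theorem exists_map_comp_singleCyclesι_eq {K : CochainComplex C ℤ} {i : ℤ} {A : C}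
    (f : (CochainComplex.singleFunctor C i).obj A ⟶ K) :
    ∃ u, (CochainComplex.singleFunctor C i).map u ≫ singleCyclesι K i = f := by
  let u : A ⟶ K.cycles i := K.liftCycles ((singleXIso i A).inv ≫ f.f i) (i + 1) (by simp) (by simp)
  have h_f : ((CochainComplex.singleFunctor C i).map u ≫ singleCyclesι K i).f i = f.f i := by
    simp [singleFunctor_map_f, singleCyclesι_f, u]
  exact ⟨u, HomologicalComplex.from_single_hom_ext h_f⟩

theorem epi_homologyMap_singleCyclesι (K : CochainComplex C ℤ) (i : ℤ) :
    Epi (HomologicalComplex.homologyMap (singleCyclesι K i) i) := by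
  have : IsIso (((CochainComplex.singleFunctor C i).obj (K.cycles i)).iCycles i) :=
    HomologicalComplex.isIso_iCycles _ i _ rfl (singleFunctor_obj_d _ _ _ _)
  have h_cyclesMap : HomologicalComplex.cyclesMap (singleCyclesι K i) i =
      HomologicalComplex.iCycles _ i ≫ (singleXIso i _).hom := by
    rw [← cancel_mono (K.iCycles i), HomologicalComplex.cyclesMap_i, singleCyclesι_f, assoc]
  have : Epi (HomologicalComplex.cyclesMap (singleCyclesι K i) i) := by
    rw [h_cyclesMap]
    infer_instance
  exact epi_of_epi_fac (HomologicalComplex.homologyπ_naturality _ i)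

end StalkComplexes

section Stalks

variable {C : Type u} [Category.{v} C] [Abelian C] [HasDerivedCategory.{w} C]

theorem subsingleton_ext_iff_forall_single_hom_eq_zero [HasExt.{e} C] (X Y : C) {j : ℕ} {i k : ℤ}
    (h : i = k + j) :
    Subsingleton (Abelian.Ext X Y j) ↔
      ∀ f : (singleFunctor C i).obj X ⟶ (singleFunctor C k).obj Y, f = 0 := by
  have eX : ((singleFunctor C i).obj X)⟦i⟧ ≅ (singleFunctor C 0).obj X :=
    ((singleFunctors C).shiftIso i 0 i (by simp)).app X
  have eY : ((singleFunctor C k).obj Y)⟦i⟧ ≅ ((singleFunctor C 0).obj Y)⟦(j : ℤ)⟧ :=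
    ((singleFunctors C).shiftIso i (-j) k (by omega)).app Y ≪≫
      (((singleFunctors C).shiftIso (j : ℤ) (-j) 0 (by simp)).app Y).symm
  rw [← subsingleton_iff_forall_eq]
  exact (Abelian.Ext.homEquiv.trans ((Iso.homCongr eX eY).symm.trans
    (Functor.FullyFaithful.ofFullyFaithful (shiftFunctor _ i)).homEquiv.symm)).subsingleton_congr

theorem exists_single_hom_epi_homologyMap (Y : DerivedCategory C) (i : ℤ) :
    ∃ (A : C) (f : (singleFunctor C i).obj A ⟶ Y), Epi ((homologyFunctor C i).map f) := by
  let K := Q.objPreimage Y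
  let φ := singleCyclesι K i
  have := epi_homologyMap_singleCyclesι K i
  have : Epi ((homologyFunctor C i).map (Q.map φ)) := by
    rw [← Functor.comp_map, ← NatIso.naturality_2 (homologyFunctorFactors C i) φ]
    exact epi_comp' inferInstance (epi_comp' this inferInstance)
  refine ⟨K.cycles i, ((singleFunctorIsoCompQ C i).app _).hom ≫ Q.map φ ≫
    (Q.objObjPreimageIso Y).hom, ?_⟩
  simp only [Functor.map_comp]
  exact epi_comp' inferInstance (epi_comp' this inferInstance)

theorem isZero_homology_of_forall_single_hom_eq_zero {Y : DerivedCategory C} {i : ℤ}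
    (h : ∀ (A : C) (f : (singleFunctor C i).obj A ⟶ Y), f = 0) :
    IsZero ((homologyFunctor C i).obj Y) := by
  obtain ⟨A, f, _⟩ := exists_single_hom_epi_homologyMap Y i
  exact IsZero.of_epi_eq_zero ((homologyFunctor C i).map f) (by rw [h A f, Functor.map_zero])

theorem isZero_homology_single {i k : ℤ} (h : i ≠ k) (A : C) :
    IsZero ((homologyFunctor C i).obj ((singleFunctor C k).obj A)) := by
  rcases h.lt_or_gt with h | h
  · exact isZero_of_isGE _ k i h
  · exact isZero_of_isLE _ k i h

end Stalks

section KInjective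

variable {C : Type u} [Category.{v} C] [Abelian C] [HasDerivedCategory.{w} C]

theorem exists_Q_map_eq_of_isKInjective {K L : CochainComplex C ℤ} [L.IsKInjective]
    (f : Q.obj K ⟶ Q.obj L) : ∃ g : K ⟶ L, Q.map g = f := by
  obtain ⟨φ, hφ⟩ := (CochainComplex.IsKInjective.Qh_map_bijective _ L).surjective
    ((quotientCompQhIso C).hom.app K ≫ f ≫ (quotientCompQhIso C).inv.app L)
  obtain ⟨g, rfl⟩ := (HomotopyCategory.quotient C _).map_surjective φ
  refine ⟨g, ?_⟩
  simpa [hφ] using (NatIso.naturality_1 (quotientCompQhIso C) g).symm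

theorem nonempty_homotopy_zero_of_isKInjective {K L : CochainComplex C ℤ} [L.IsKInjective]
    {g : K ⟶ L} (hg : Q.map g = 0) : Nonempty (Homotopy g 0) := by
  refine ⟨HomotopyCategory.homotopyOfEq _ _
    ((CochainComplex.IsKInjective.Qh_map_bijective _ L).injective ?_)⟩
  have := NatIso.naturality_2 (quotientCompQhIso C) g
  rw [hg] at this
  simpa using this.symm

theorem exists_injective_complex_iso [EnoughInjectives C] (Y : DerivedCategory C) (n : ℤ)
    [Y.IsGE n] : ∃ (K : CochainComplex C ℤ) (_ : ∀ i, Injective (K.X i)) (_ : K.IsStrictlyGE n),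
      Nonempty (Y ≅ Q.obj K) := by
  obtain ⟨L, _, ⟨e⟩⟩ := exists_iso_Q_obj_of_isGE Y n
  obtain ⟨K, i, _, hK, hK'⟩ :=
    CochainComplex.Plus.modelCategoryQuillen.exists_quasiIso_injective L n
  exact ⟨K, hK, hK', ⟨e ≪≫ asIso (Q.map i)⟩⟩

end KInjective

section InjectiveStalks

variable {C : Type u} [Category.{v} C] [Abelian C]

instance isKInjective_singleFunctor_obj (I : C) [Injective I] (i : ℤ) :
    ((CochainComplex.singleFunctor C i).obj I).IsKInjective := by
  have (j : ℤ) : Injective (((CochainComplex.singleFunctor C i).obj I).X j) := by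
    by_cases h : j = i
    · subst h
      exact Injective.of_iso (singleXIso j I).symm inferInstance
    · exact (HomologicalComplex.isZero_single_obj_X (.up ℤ) i I j h).injective
  exact CochainComplex.isKInjective_of_injective _ i

open CochainComplex.HomComplex in
theorem nonempty_homotopy_zero_of_homologyMap_eq_zero {K : CochainComplex C ℤ} {I : C}
    [Injective I] {i : ℤ} (g : K ⟶ (CochainComplex.singleFunctor C i).obj I)
    (hg : HomologicalComplex.homologyMap g i = 0) : Nonempty (Homotopy g 0) := by
  have : IsIso (((CochainComplex.singleFunctor C i).obj I).homologyπ i) :=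
    HomologicalComplex.isIso_homologyπ _ _ i rfl rfl
  have h_cycles : HomologicalComplex.cyclesMap g i = 0 := by
    rw [← cancel_mono (HomologicalComplex.homologyπ _ i),
      ← HomologicalComplex.homologyπ_naturality g i, hg, comp_zero, zero_comp]
  obtain ⟨a, ha⟩ := Cochain.toSingleMk_surjective (Cochain.ofHom g) i (add_zero i)
  let s := singleXIso i I
  have h_iCycles : K.iCycles i ≫ a = 0 := by
    have h_comp : a ≫ s.inv = g.f i := by simpa using! Cochain.congr_v ha i i (add_zero i)
    rw [← cancel_mono s.inv, assoc, h_comp, zero_comp, ← HomologicalComplex.cyclesMap_i, h_cycles,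
      zero_comp]
  have h_exact : (ShortComplex.mk (K.iCycles i) (K.d i (i + 1)) (K.iCycles_d _ _)).Exact :=
    ShortComplex.exact_of_f_is_kernel _ (K.cyclesIsKernel i (i + 1) (by simp))
  let ψ : K.X (i + 1) ⟶ I := h_exact.descToInjective a h_iCycles
  have hψ : K.d i (i + 1) ≫ ψ = a := h_exact.comp_descToInjective _ _
  refine ⟨(Cochain.equivHomotopy g 0).symm ⟨Cochain.toSingleMk ψ (by omega : i + 1 + -1 = i), ?_⟩⟩
  rw [← ha, Cochain.ofHom_zero, add_zero, Cochain.δ_toSingleMk _ _ 0 i (add_zero i), hψ,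
    Int.negOnePow_zero, one_smul]

variable [HasDerivedCategory.{w} C]

theorem eq_zero_of_homologyFunctor_map_eq_zero {Y : DerivedCategory C} {I : C} [Injective I] {i : ℤ}
    (f : Y ⟶ (singleFunctor C i).obj I) (hf : (homologyFunctor C i).map f = 0) : f = 0 := by
  let s := (singleFunctorIsoCompQ C i).app I
  let e := Q.objObjPreimageIso Y
  obtain ⟨g, hg⟩ := exists_Q_map_eq_of_isKInjective
    (L := (CochainComplex.singleFunctor C i).obj I) (e.hom ≫ f ≫ s.hom)
  have h_homology : (HomologicalComplex.homologyFunctor C (.up ℤ) i).map g = 0 := by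
    have : (homologyFunctor C i).map (Q.map g) = 0 := by simp [hg, hf]
    rw [← NatIso.naturality_1 (homologyFunctorFactors C i) g, Functor.comp_map, this, zero_comp,
      comp_zero]
  obtain ⟨h⟩ := nonempty_homotopy_zero_of_homologyMap_eq_zero g h_homology
  have := Q_map_eq_of_homotopy C h
  rw [hg, Functor.map_zero] at this
  simpa using this

theorem hom_single_eq_zero_of_isZero_homology {Y : DerivedCategory C} {I : C} [Injective I] {i : ℤ}
    (h : IsZero ((homologyFunctor C i).obj Y)) (f : Y ⟶ (singleFunctor C i).obj I) : f = 0 :=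
  eq_zero_of_homologyFunctor_map_eq_zero f (h.eq_of_src _ _)

end InjectiveStalks

section Powers

variable {C : Type u} [Category.{v} C] {ι : Type t} [HasProductsOfShape ι C]

variable (C ι) in
/-- The endofunctor `X ↦ X ^ ι`, presented as a limit over a discrete diagram so that its exactness
is that of `lim`. -/
noncomputable def powerFunctor : C ⥤ C :=
  Functor.const (Discrete ι) ⋙ lim

/-- The projection `X ^ ι ⟶ X` to the factor of index `j`. -/
noncomputable def powerπ (X : C) (j : ι) : (powerFunctor C ι).obj X ⟶ X :=
  limit.π ((Functor.const (Discrete ι)).obj X) ⟨j⟩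

/-- The morphism `A ⟶ X ^ ι` with given components. -/
noncomputable def powerLift {A X : C} (f : ι → (A ⟶ X)) : A ⟶ (powerFunctor C ι).obj X :=
  limit.lift ((Functor.const (Discrete ι)).obj X)
    { pt := A, π := Discrete.natTrans fun j ↦ f j.as }

@[simp]
theorem powerLift_π {A X : C} (f : ι → (A ⟶ X)) (j : ι) : powerLift f ≫ powerπ X j = f j :=
  limit.lift_π _ _

theorem power_hom_ext {A X : C} {f g : A ⟶ (powerFunctor C ι).obj X}
    (h : ∀ j, f ≫ powerπ X j = g ≫ powerπ X j) : f = g :=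
  limit.hom_ext fun ⟨j⟩ ↦ h j

@[simp]
theorem powerFunctor_map_π {X Y : C} (f : X ⟶ Y) (j : ι) :
    (powerFunctor C ι).map f ≫ powerπ Y j = powerπ X j ≫ f :=
  limMap_π _ _

variable [Abelian C]

instance : (powerFunctor C ι).Additive where
  map_add := power_hom_ext fun j ↦ by simp

instance powerFunctor_preservesFiniteLimits : PreservesFiniteLimits (powerFunctor C ι) :=
  inferInstanceAs (PreservesFiniteLimits (Functor.const (Discrete ι) ⋙ lim))

instance powerFunctor_preservesFiniteColimits [HasExactLimitsOfShape (Discrete ι) C] :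
    PreservesFiniteColimits (powerFunctor C ι) :=
  inferInstanceAs (PreservesFiniteColimits (Functor.const (Discrete ι) ⋙ lim))

instance injective_powerFunctor_obj (I : C) [Injective I] :
    Injective ((powerFunctor C ι).obj I) where
  factors f i _ := ⟨powerLift fun j ↦ Injective.factorThru (f ≫ powerπ I j) i,
    power_hom_ext fun j ↦ by simp⟩

/-- The complex `L ^ ι`. -/
noncomputable abbrev complexPower (ι : Type t) [HasProductsOfShape ι C] (L : CochainComplex C ℤ) :
    CochainComplex C ℤ :=
  ((powerFunctor C ι).mapHomologicalComplex _).obj L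

/-- The projection `L ^ ι ⟶ L` to the factor of index `j`, for a complex `L`. -/
noncomputable def complexPowerπ (L : CochainComplex C ℤ) (j : ι) : complexPower ι L ⟶ L where
  f i := powerπ (L.X i) j
  comm' _ _ _ := (powerFunctor_map_π _ _).symm

theorem complexPower_hom_ext {L : CochainComplex C ℤ} {A : C} {i : ℤ}
    {f g : A ⟶ (complexPower ι L).X i}
    (h : ∀ j, f ≫ (complexPowerπ L j).f i = g ≫ (complexPowerπ L j).f i) : f = g :=
  power_hom_ext h

theorem complexPowerπ_naturality {K L : CochainComplex C ℤ} (r : K ⟶ L) (j : ι) :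
    ((powerFunctor C ι).mapHomologicalComplex _).map r ≫ complexPowerπ L j =
      complexPowerπ K j ≫ r := by
  ext i
  exact powerFunctor_map_π (r.f i) j

theorem nonempty_homotopy_zero_of_forall_comp_complexPowerπ {K L : CochainComplex C ℤ}
    (g : K ⟶ complexPower ι L) (h : ∀ j, Nonempty (Homotopy (g ≫ complexPowerπ L j) 0)) :
    Nonempty (Homotopy g 0) := by
  let H j := (h j).some
  let s (a b : ℤ) : K.X a ⟶ (complexPower ι L).X b := powerLift fun j ↦ (H j).hom a b
  have hs (a b : ℤ) (j : ι) : s a b ≫ (complexPowerπ L j).f b = (H j).hom a b :=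
    powerLift_π _ j
  refine ⟨{ hom := s
            zero := fun a b hab ↦ complexPower_hom_ext fun j ↦ ?_
            comm := fun i ↦ complexPower_hom_ext fun j ↦ ?_ }⟩
  · rw [hs, (H j).zero a b hab, zero_comp]
  · have := (H j).comm i
    rw [dNext_eq _ (show (ComplexShape.up ℤ).Rel i (i + 1) by simp),
      prevD_eq _ (show (ComplexShape.up ℤ).Rel (i - 1) i by simp)] at this ⊢
    rw [← HomologicalComplex.comp_f, this]
    simp only [Preadditive.add_comp, assoc, hs, ← (complexPowerπ L j).comm,
      HomologicalComplex.zero_f, zero_comp]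
    rw [← assoc (s _ _), hs]

theorem exists_single_iso_complexPower (X : C) (k : ℤ) :
    ∃ e : (CochainComplex.singleFunctor C k).obj ((powerFunctor C ι).obj X) ≅
        complexPower ι ((CochainComplex.singleFunctor C k).obj X),
      ∀ j, e.hom ≫ complexPowerπ _ j =
        (CochainComplex.singleFunctor C k).map (powerπ X j) := by
  refine ⟨((HomologicalComplex.singleMapHomologicalComplex (powerFunctor C ι) _ k).app X).symm,
    fun j ↦ HomologicalComplex.to_single_hom_ext ?_⟩
  calc _ = ((singleXIso k _).hom ≫ (powerFunctor C ι).map (singleXIso k X).inv) ≫ powerπ _ j :=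
        congrArg (· ≫ powerπ _ j)
          (HomologicalComplex.singleMapHomologicalComplex_inv_app_self _ _ _ _)
    _ = (singleXIso k _).hom ≫ powerπ X j ≫ (singleXIso k X).inv := by
        rw [assoc, powerFunctor_map_π]
    _ = _ := (singleFunctor_map_f _ _).symm

variable [HasDerivedCategory.{w} C]

theorem eq_zero_of_forall_comp_complexPowerπ_eq_zero {Z : DerivedCategory C}
    {L : CochainComplex C ℤ} (n : ℤ) [L.IsStrictlyGE n] [∀ i, Injective (L.X i)]
    (f : Z ⟶ Q.obj (complexPower ι L)) (hf : ∀ j, f ≫ Q.map (complexPowerπ L j) = 0) : f = 0 := by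
  have : L.IsKInjective := CochainComplex.isKInjective_of_injective L n
  have : (complexPower ι L).IsKInjective := by
    have (i : ℤ) : Injective ((complexPower ι L).X i) := injective_powerFunctor_obj (L.X i)
    exact CochainComplex.isKInjective_of_injective _ n
  let e := Q.objObjPreimageIso Z
  obtain ⟨g, hg⟩ := exists_Q_map_eq_of_isKInjective (e.hom ≫ f)
  obtain ⟨h⟩ := nonempty_homotopy_zero_of_forall_comp_complexPowerπ g fun j ↦
    nonempty_homotopy_zero_of_isKInjective (by rw [Functor.map_comp, hg, assoc, hf, comp_zero])
  rw [← cancel_epi e.hom, ← hg, Q_map_eq_of_homotopy C h, Functor.map_zero, comp_zero]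

theorem eq_zero_of_forall_comp_powerπ_eq_zero [EnoughInjectives C]
    [HasExactLimitsOfShape (Discrete ι) C] {Z : DerivedCategory C} {X : C} {k : ℤ}
    (f : Z ⟶ (singleFunctor C k).obj ((powerFunctor C ι).obj X))
    (hf : ∀ j, f ≫ (singleFunctor C k).map (powerπ X j) = 0) : f = 0 := by
  obtain ⟨J, r, hr, _, _⟩ := CochainComplex.Plus.modelCategoryQuillen.exists_quasiIso_injective
    ((CochainComplex.singleFunctor C k).obj X) k
  let r' := ((powerFunctor C ι).mapHomologicalComplex _).map r
  have : QuasiIso r' := HomologicalComplex.quasiIso_map_of_preservesHomology _ _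
  obtain ⟨σ, hσ⟩ := exists_single_iso_complexPower (ι := ι) X k
  let s (Y : C) : (singleFunctor C k).obj Y ≅ Q.obj ((CochainComplex.singleFunctor C k).obj Y) :=
    (singleFunctorIsoCompQ C k).app Y
  have h_zero : f ≫ (s _).hom ≫ Q.map σ.hom ≫ Q.map r' = 0 := by
    refine eq_zero_of_forall_comp_complexPowerπ_eq_zero k _ fun j ↦ ?_
    have hs : (singleFunctor C k).map (powerπ X j) ≫ (s X).hom =
        (s _).hom ≫ Q.map ((CochainComplex.singleFunctor C k).map (powerπ X j)) :=
      (singleFunctorIsoCompQ C k).hom.naturality (powerπ X j)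
    rw [assoc, assoc, assoc, ← Q.map_comp r', complexPowerπ_naturality, ← Q.map_comp σ.hom,
      ← assoc σ.hom, hσ, Q.map_comp, ← assoc (s _).hom, ← hs, assoc, ← assoc f, hf, zero_comp]
  exact zero_of_comp_mono _ h_zero

theorem eq_zero_of_forall_comp_singleFunctor_map_π_eq_zero [EnoughInjectives C]
    [HasExactLimitsOfShape (Discrete ι) C] {Z : DerivedCategory C} {X : C} {k : ℤ}
    (f : Z ⟶ (singleFunctor C k).obj (∏ᶜ fun _ : ι ↦ X))
    (hf : ∀ j, f ≫ (singleFunctor C k).map (Pi.π (fun _ : ι ↦ X) j) = 0) : f = 0 := by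
  let e : (∏ᶜ fun _ : ι ↦ X) ≅ (powerFunctor C ι).obj X :=
    { hom := powerLift (Pi.π _), inv := Pi.lift (powerπ X)
      hom_inv_id := Pi.hom_ext _ _ fun j ↦ by simp
      inv_hom_id := power_hom_ext fun j ↦ by simp }
  have h_zero : f ≫ ((singleFunctor C k).mapIso e).hom = 0 := by
    refine eq_zero_of_forall_comp_powerπ_eq_zero _ fun j ↦ ?_
    rw [assoc, Functor.mapIso_hom, ← Functor.map_comp, powerLift_π, hf]
  exact zero_of_comp_mono _ h_zero

end Powers

section InjDimNonpos

variable {C : Type u} [Category.{v} C] [Abelian C] [HasDerivedCategory.{w} C]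

/-- An object `Y` of the derived category has nonpositive injective dimension if `Ext ^ i (A, Y)`
vanishes for all `i > 0` and all `A` in `C`, where `Ext ^ i (A, Y)` is encoded as the morphisms
to `Y` from the stalk complex of `A` in degree `i`. -/
def InjDimNonpos (Y : DerivedCategory C) : Prop :=
  ∀ ⦃i : ℤ⦄, 0 < i → ∀ (A : C) (f : (singleFunctor C i).obj A ⟶ Y), f = 0

theorem InjDimNonpos.isLE {Y : DerivedCategory C} (hY : InjDimNonpos Y) : Y.IsLE 0 :=
  (isLE_iff _ _).2 fun _ hi ↦ isZero_homology_of_forall_single_hom_eq_zero (hY hi)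

theorem injDimNonpos_single (I : C) [Injective I] : InjDimNonpos ((singleFunctor C 0).obj I) :=
  fun _ hi A f ↦ hom_single_eq_zero_of_isZero_homology (isZero_homology_single hi.ne A) f

theorem InjDimNonpos.fiber {Y' Y Z : DerivedCategory C} {f : Y' ⟶ Y} {g : Y ⟶ Z}
    {h : Z ⟶ Y'⟦(1 : ℤ)⟧} (hT : Triangle.mk f g h ∈ distTriang (DerivedCategory C))
    (hY : InjDimNonpos Y)
    (hZ : ∀ ⦃i : ℤ⦄, 0 ≤ i → ∀ (A : C) (p : (singleFunctor C i).obj A ⟶ Z), p ≫ h = 0) :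
    InjDimNonpos Y' := by
  intro i hi A p
  have hpf : p⟦(1 : ℤ)⟧' ≫ f⟦(1 : ℤ)⟧' = 0 := by
    rw [← Functor.map_comp, hY hi A (p ≫ f), Functor.map_zero]
  obtain ⟨q, hq⟩ : ∃ q : ((singleFunctor C i).obj A)⟦(1 : ℤ)⟧ ⟶ Z, p⟦(1 : ℤ)⟧' = q ≫ h :=
    Triangle.coyoneda_exact₁ _ hT (p⟦(1 : ℤ)⟧') hpf
  let e := ((singleFunctors C).shiftIso 1 (i - 1) i (by simp)).app A
  have hqh : q ≫ h = 0 := by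
    rw [← cancel_epi e.inv, ← assoc, comp_zero]
    exact hZ (by omega) A (e.inv ≫ q)
  rwa [hqh, Functor.map_eq_zero_iff] at hq

theorem nonempty_iso_single_homology (Y : DerivedCategory C) [Y.IsGE 0] [Y.IsLE 0] :
    Nonempty (Y ≅ (singleFunctor C 0).obj ((homologyFunctor C 0).obj Y)) := by
  obtain ⟨D, ⟨e⟩⟩ := exists_iso_singleFunctor_obj_of_isGE_of_isLE Y 0
  exact ⟨e ≪≫ (singleFunctor C 0).mapIso
    ((homologyFunctor C 0).mapIso e ≪≫ (singleFunctorCompHomologyFunctorIso C 0).app D).symm⟩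

theorem isGE_obj₁_of_distTriang {X Y Z : DerivedCategory C} {f : X ⟶ Y} {g : Y ⟶ Z}
    {h : Z ⟶ X⟦(1 : ℤ)⟧} (hT : Triangle.mk f g h ∈ distTriang (DerivedCategory C)) {n : ℤ}
    (hY : Y.IsGE n) (hZ : Z.IsGE (n - 1)) : X.IsGE n :=
  (isGE_iff _ _).2 fun k hk ↦
    (HomologySequence.exact₁ _ hT (k - 1) k (by simp)).isZero_of_both_zeros
      ((isZero_of_isGE Z (n - 1) (k - 1) (by omega)).eq_of_src _ _)
      ((isZero_of_isGE Y n k hk).eq_of_tgt _ _)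

theorem injective_cycles_zero {K : CochainComplex C ℤ} [K.IsKInjective] [Injective (K.X 0)]
    (hK : InjDimNonpos (Q.obj K)) : Injective (K.cycles 0) := by
  have hφ : Q.map (singleCyclesι K 1) = 0 :=
    zero_of_epi_comp _ (hK one_pos _ (((singleFunctorIsoCompQ C 1).app _).hom ≫ Q.map _))
  obtain ⟨H⟩ := nonempty_homotopy_zero_of_isKInjective hφ
  obtain ⟨s, hs⟩ : ∃ s : K.cycles 1 ⟶ K.X 0, s ≫ K.d 0 1 = K.iCycles 1 := by
    let e := singleXIso 1 (K.cycles 1)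
    have h_comm := H.comm 1
    rw [dNext_eq _ (show (ComplexShape.up ℤ).Rel 1 2 by simp),
      prevD_eq _ (show (ComplexShape.up ℤ).Rel 0 1 by simp)] at h_comm
    refine ⟨e.inv ≫ H.hom 1 0, ?_⟩
    rw [singleFunctor_obj_d, zero_comp, zero_add, HomologicalComplex.zero_f, add_zero,
      singleCyclesι_f] at h_comm
    rw [assoc, ← h_comm, Iso.inv_hom_id_assoc]
  let r : K.X 0 ⟶ K.cycles 0 := K.liftCycles (𝟙 _ - K.toCycles 0 1 ≫ s) 1 (by simp) (by
    rw [Preadditive.sub_comp, id_comp, assoc, hs, HomologicalComplex.toCycles_i, sub_self])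
  have h_retract : K.iCycles 0 ≫ r = 𝟙 _ := by
    have h_cycles : K.iCycles 0 ≫ K.toCycles 0 1 = 0 := by simp [← cancel_mono (K.iCycles 1)]
    rw [← cancel_mono (K.iCycles 0), assoc, HomologicalComplex.liftCycles_i, Preadditive.comp_sub,
      comp_id, ← assoc, h_cycles, zero_comp, sub_zero, id_comp]
  exact Retract.injective ⟨K.iCycles 0, r, h_retract⟩

theorem InjDimNonpos.exists_precover [EnoughInjectives C] {Y : DerivedCategory C}
    (hY : InjDimNonpos Y) (n : ℤ) [Y.IsGE n] :
    ∃ (I : C) (_ : Injective I) (f : (singleFunctor C 0).obj I ⟶ Y),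
      ∀ (A : C) (g : (singleFunctor C 0).obj A ⟶ Y), ∃ u, u ≫ f = g := by
  obtain ⟨K, hK, _, ⟨e⟩⟩ := exists_injective_complex_iso Y n
  have := CochainComplex.isKInjective_of_injective K n
  have : Injective (K.cycles 0) :=
    injective_cycles_zero fun i hi A f ↦ zero_of_comp_mono e.inv (hY hi A _)
  let s (A : C) := (singleFunctorIsoCompQ C 0).app A
  refine ⟨K.cycles 0, this, (s _).hom ≫ Q.map (singleCyclesι K 0) ≫ e.inv, fun A g ↦ ?_⟩
  obtain ⟨ψ, hψ⟩ := exists_Q_map_eq_of_isKInjective ((s A).inv ≫ g ≫ e.hom)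
  obtain ⟨u, hu⟩ := exists_map_comp_singleCyclesι_eq ψ
  refine ⟨(singleFunctor C 0).map u, ?_⟩
  have hs : (singleFunctor C 0).map u ≫ (s _).hom =
      (s A).hom ≫ Q.map ((CochainComplex.singleFunctor C 0).map u) :=
    (singleFunctorIsoCompQ C 0).hom.naturality u
  rw [← assoc, hs, assoc, ← assoc (Q.map _), ← Functor.map_comp, hu, hψ]
  simp

theorem InjDimNonpos.exists_iso_single [EnoughInjectives C] {Y : DerivedCategory C}
    (hY : InjDimNonpos Y) [Y.IsGE 0] :
    ∃ (I : C) (_ : Injective I), Nonempty (Y ≅ (singleFunctor C 0).obj I) := by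
  have := hY.isLE
  obtain ⟨J, ⟨e⟩⟩ := exists_iso_singleFunctor_obj_of_isGE_of_isLE Y 0
  obtain ⟨I, _, f, hf⟩ := hY.exists_precover 0
  obtain ⟨u, hu⟩ := hf J e.inv
  have h_retract :
      (singleFunctor C 0).preimage u ≫ (singleFunctor C 0).preimage (f ≫ e.hom) = 𝟙 J :=
    (singleFunctor C 0).map_injective (by simp [← assoc, hu])
  exact ⟨J, Retract.injective ⟨_, _, h_retract⟩, ⟨e⟩⟩

theorem InjDimNonpos.exists_distTriang [EnoughInjectives C] {Y : DerivedCategory C}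
    (hY : InjDimNonpos Y) (n : ℤ) (hn : n ≤ 0) (hYn : Y.IsGE (n - 1)) :
    ∃ (I : C) (_ : Injective I) (Y' : DerivedCategory C) (f : Y' ⟶ (singleFunctor C 0).obj I)
      (g : (singleFunctor C 0).obj I ⟶ Y) (h : Y ⟶ Y'⟦(1 : ℤ)⟧),
      Triangle.mk f g h ∈ distTriang (DerivedCategory C) ∧ Y'.IsGE n ∧ InjDimNonpos Y' := by
  obtain ⟨I, hI, g, hg⟩ := hY.exists_precover (n - 1)
  obtain ⟨Y', f, h, hT⟩ := distinguished_cocone_triangle₁ g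
  have hgh : g ≫ h = 0 := comp_distTriang_mor_zero₂₃ _ hT
  refine ⟨I, hI, Y', f, g, h, hT,
    isGE_obj₁_of_distTriang hT (TStructure.t.isGE_of_ge _ n 0 hn) hYn,
    (injDimNonpos_single I).fiber hT fun i hi A p ↦ ?_⟩
  rcases hi.eq_or_lt with rfl | hi
  · obtain ⟨u, rfl⟩ := hg A p
    rw [assoc, hgh, comp_zero]
  · rw [hY hi A p, zero_comp]

end InjDimNonpos

section Coresolutions

open scoped ZeroObject

variable {C : Type u} [Category.{v} C] [Abelian C]

/-- `FiniteCoresolution P L n K` asserts that there is an exact sequence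
`0 ⟶ K ⟶ P₁ ⟶ ⋯ ⟶ Pₙ ⟶ L ⟶ 0` all of whose middle terms satisfy `P`, encoded as an iterated
splice of short exact sequences. -/
inductive FiniteCoresolution (P : ObjectProperty C) (L : C) : ℕ → C → Prop
  | of_iso {K : C} (e : K ≅ L) : FiniteCoresolution P L 0 K
  | splice {n : ℕ} {S : ShortComplex C} (hS : S.ShortExact) (h₂ : P S.X₂)
      (h₃ : FiniteCoresolution P L n S.X₃) : FiniteCoresolution P L (n + 1) S.X₁

theorem exact_precomp {n : ℕ} {S : ComposableArrows C (n + 1)} (hS : S.Exact) {X : C}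
    (f : X ⟶ S.left) (w : f ≫ S.map' 0 1 = 0) (hf : (ShortComplex.mk f (S.map' 0 1) w).Exact) :
    (S.precomp f).Exact :=
  ComposableArrows.exact_of_δ₀ hf.exact_toComposableArrows hS

theorem exact_comp_of_epi {X' X Y Z : C} {f : X ⟶ Y} {g : Y ⟶ Z} {w : f ≫ g = 0}
    (h : (ShortComplex.mk f g w).Exact) (p : X' ⟶ X) [Epi p] :
    (ShortComplex.mk (p ≫ f) g (by rw [assoc, w, comp_zero])).Exact :=
  (ShortComplex.exact_iff_of_epi_of_isIso_of_mono
    (S₁ := .mk (p ≫ f) g (by rw [assoc, w, comp_zero])) (S₂ := .mk f g w)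
    { τ₁ := p, τ₂ := 𝟙 Y, τ₃ := 𝟙 Z }).2 h

theorem exact_comp_of_mono {X Y Z Z' : C} {f : X ⟶ Y} {g : Y ⟶ Z} {w : f ≫ g = 0}
    (h : (ShortComplex.mk f g w).Exact) (m : Z ⟶ Z') [Mono m] :
    (ShortComplex.mk f (g ≫ m) (by rw [← assoc, w, zero_comp])).Exact :=
  (ShortComplex.exact_iff_of_epi_of_isIso_of_mono
    (S₁ := .mk f g w) (S₂ := .mk f (g ≫ m) (by rw [← assoc, w, zero_comp]))
    { τ₁ := 𝟙 X, τ₂ := 𝟙 Y, τ₃ := m }).1 h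

theorem FiniteCoresolution.exists_exact_mono {P : ObjectProperty C} {K L : C} {n : ℕ}
    (h : FiniteCoresolution P L n K) :
    ∃ S : ComposableArrows C (n + 2), S.Exact ∧ Mono (S.map' 0 1) ∧
      IsZero (S.obj (Fin.last (n + 2))) ∧ S.obj 0 = K ∧
      (∀ (i : ℕ) (_ : 1 ≤ i) (_ : i ≤ n), P (S.obj ⟨i, by omega⟩)) ∧
      S.obj ⟨n + 1, by omega⟩ = L := by
  induction h with
  | @of_iso K e =>
    have h_exact : (ShortComplex.mk e.hom (0 : L ⟶ 0) comp_zero).Exact :=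
      (ShortComplex.exact_iff_epi _ rfl).2 inferInstance
    exact ⟨ComposableArrows.mk₂ e.hom 0, h_exact.exact_toComposableArrows,
      inferInstanceAs (Mono e.hom), isZero_zero C, rfl, fun i h₁ h₂ ↦ by omega, rfl⟩
  | @splice n S hS h₂ _ ih =>
    obtain ⟨S', hS', h_mono, h_last, h_zero, hP, hL⟩ := ih
    have := hS.epi_g
    let k : S.X₃ ≅ S'.left := eqToIso h_zero.symm
    let d : S'.left ⟶ S'.δ₀.left := S'.map' 0 1
    have : Mono d := h_mono
    have h_tail : (S'.δ₀.precomp ((S.g ≫ k.hom) ≫ d)).Exact :=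
      exact_precomp hS'.δ₀ _ _ (exact_comp_of_epi (hS'.exact 0) (S.g ≫ k.hom))
    have h_head := exact_comp_of_mono (exact_comp_of_mono hS.exact k.hom) d
    refine ⟨(S'.δ₀.precomp ((S.g ≫ k.hom) ≫ d)).precomp S.f, exact_precomp h_tail _ _ h_head,
      hS.mono_f, h_last, rfl, fun i h₁ hi ↦ ?_, hL⟩
    obtain _ | _ | i := i
    · omega
    · exact h₂
    · exact hP (i + 1) (by omega) (by omega)

theorem FiniteCoresolution.exists_exact {P : ObjectProperty C} {K L : C} {n : ℕ}
    (h : FiniteCoresolution P L n K) :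
    ∃ S : ComposableArrows C (n + 3), S.Exact ∧ IsZero (S.obj 0) ∧
      IsZero (S.obj (Fin.last (n + 3))) ∧ S.obj ⟨1, by omega⟩ = K ∧
      (∀ (i : ℕ) (_ : 2 ≤ i) (_ : i ≤ n + 1), P (S.obj ⟨i, by omega⟩)) ∧
      S.obj ⟨n + 2, by omega⟩ = L := by
  obtain ⟨S, hS, h_mono, h_last, h_zero, hP, hL⟩ := h.exists_exact_mono
  refine ⟨S.precomp (0 : 0 ⟶ S.left),
    exact_precomp hS _ zero_comp ((ShortComplex.exact_iff_mono _ rfl).2 h_mono), isZero_zero C,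
    h_last, h_zero, fun i h₂ hi ↦ ?_, hL⟩
  obtain _ | i := i
  · omega
  · exact hP i (by omega) (by omega)

theorem exists_injective_finiteCoresolution [HasExt.{e} C] [EnoughInjectives C] {n : ℕ} {X : C}
    (h : ∀ M : C, Subsingleton (Abelian.Ext.{e} M X (n + 1))) :
    ∃ L, Injective L ∧ FiniteCoresolution (isInjective C) L n X := by
  induction n generalizing X with
  | zero => exact ⟨X, injective_iff_subsingleton_ext_one.2 h, .of_iso (Iso.refl X)⟩
  | succ n ih =>
    let I := (EnoughInjectives.presentation X).some
    have h_dimension_shift (M : C) :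
        Subsingleton (Abelian.Ext.{e} M I.shortComplex.X₃ (n + 1)) := by
      refine subsingleton_of_forall_eq 0 fun x ↦ ?_
      have : Subsingleton (Abelian.Ext M I.shortComplex.X₁ (n + 1 + 1)) := h M
      obtain ⟨y, rfl⟩ := Abelian.Ext.covariant_sequence_exact₃ M I.shortExact_shortComplex x rfl
        (Subsingleton.elim _ _)
      rw [Abelian.Ext.eq_zero_of_injective y, Abelian.Ext.zero_comp]
    obtain ⟨L, hL, hLX⟩ := ih h_dimension_shift
    exact ⟨L, hL, .splice I.shortExact_shortComplex I.injective hLX⟩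

theorem subsingleton_ext_of_le [HasExt.{e} C] [EnoughInjectives C] {T : C} {n j : ℕ} (hnj : n ≤ j)
    (h : ∀ X : C, Subsingleton (Abelian.Ext.{e} T X (n + 1))) (X : C) :
    Subsingleton (Abelian.Ext.{e} T X (j + 1)) := by
  induction j, hnj using Nat.le_induction generalizing X with
  | base => exact h X
  | succ j _ ih =>
    let I := (EnoughInjectives.presentation X).some
    have := ih I.shortComplex.X₃
    refine subsingleton_of_forall_eq (α := Abelian.Ext T I.shortComplex.X₁ (j + 1 + 1)) 0 fun x ↦ ?_
    obtain ⟨y, rfl⟩ := Abelian.Ext.covariant_sequence_exact₁ T I.shortExact_shortComplex x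
      (Abelian.Ext.eq_zero_of_injective _) rfl
    rw [Subsingleton.elim y 0, Abelian.Ext.zero_comp]

end Coresolutions

section FullyFaithful

variable {D : Type u} [Category.{v} D] [HasZeroMorphisms D]
  {D' : Type u₂} [Category.{v₂} D'] [HasZeroMorphisms D']

theorem forall_hom_eq_zero_iff_of_obj_iso (F : D ⥤ D') [F.Full] [F.Faithful]
    [F.PreservesZeroMorphisms] {X Y : D} {X' Y' : D'} (eX : F.obj X ≅ X') (eY : F.obj Y ≅ Y') :
    (∀ f : X ⟶ Y, f = 0) ↔ ∀ f : X' ⟶ Y', f = 0 := by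
  simp only [← subsingleton_iff_forall_eq]
  exact ((Functor.FullyFaithful.ofFullyFaithful F).homEquiv.trans
    (eX.homCongr eY)).subsingleton_congr

end FullyFaithful

section Triangles

variable {C : Type u} [Category.{v} C] [Abelian C] [HasDerivedCategory.{w} C]

theorem shortExact_homology_of_distTriang {X Y Z : DerivedCategory C} {f : X ⟶ Y} {g : Y ⟶ Z}
    {h : Z ⟶ X⟦(1 : ℤ)⟧} (hT : Triangle.mk f g h ∈ distTriang (DerivedCategory C)) {i : ℤ}
    (hX : X.IsLE i) (hZ : Z.IsGE i) :
    (ShortComplex.mk ((homologyFunctor C i).map f) ((homologyFunctor C i).map g)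
      (by rw [← Functor.map_comp, show f ≫ g = 0 from comp_distTriang_mor_zero₁₂ _ hT,
        Functor.map_zero])).ShortExact where
  exact := HomologySequence.exact₂ _ hT i
  mono_f := (HomologySequence.mono_homologyMap_mor₁_iff _ hT (i - 1) i).2
    ((isZero_of_isGE Z i (i - 1) (by simp)).eq_of_src _ _)
  epi_g := (HomologySequence.epi_homologyMap_mor₂_iff _ hT i (i + 1)).2
    ((isZero_of_isLE X i (i + 1) (by simp)).eq_of_tgt _ _)

theorem exists_comp_eq_id_of_forall_comp_single_map_eq_zero {X Y : C} {i : ℤ} (f : X ⟶ Y)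
    (hf : ∀ (Z : DerivedCategory C) (g : Z ⟶ (singleFunctor C i).obj X),
      g ≫ (singleFunctor C i).map f = 0 → g = 0) : ∃ r : Y ⟶ X, f ≫ r = 𝟙 X := by
  obtain ⟨Z, g, h, hT⟩ := distinguished_cocone_triangle₁ ((singleFunctor C i).map f)
  have hg : g = 0 := hf Z g (comp_distTriang_mor_zero₁₂ _ hT)
  obtain ⟨r, hr⟩ : ∃ r, 𝟙 ((singleFunctor C i).obj X) = (singleFunctor C i).map f ≫ r :=
    Triangle.yoneda_exact₂ _ hT (𝟙 _) ((congrArg (· ≫ 𝟙 _) hg).trans zero_comp)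
  refine ⟨(singleFunctor C i).preimage r, (singleFunctor C i).map_injective ?_⟩
  rw [Functor.map_comp, Functor.map_preimage, ← hr, CategoryTheory.Functor.map_id]

theorem eq_zero_of_forall_comp_single_map_eq_zero {W I : C} (hW : IsCoseparator W) [Injective I]
    {i : ℤ} {Y : DerivedCategory C} (f : Y ⟶ (singleFunctor C i).obj I)
    (hf : ∀ q : I ⟶ W, f ≫ (singleFunctor C i).map q = 0) : f = 0 := by
  let s := singleFunctorCompHomologyFunctorIso C i
  refine eq_zero_of_homologyFunctor_map_eq_zero f ?_
  rw [← cancel_mono (s.hom.app I), zero_comp]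
  refine hW.def _ _ fun q ↦ ?_
  have h_nat : (homologyFunctor C i).map ((singleFunctor C i).map q) ≫ s.hom.app W =
      s.hom.app I ≫ q := s.hom.naturality q
  rw [zero_comp, assoc, ← h_nat, ← assoc, ← Functor.map_comp, hf, Functor.map_zero, zero_comp]

theorem isZero_homology_of_isSeparator {U : C} (hU : IsSeparator U) {i : ℤ} {Y : DerivedCategory C}
    (h : ∀ f : (singleFunctor C i).obj U ⟶ Y, f = 0) : IsZero ((homologyFunctor C i).obj Y) := by
  obtain ⟨A, f, _⟩ := exists_single_hom_epi_homologyMap Y i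
  let s := singleFunctorCompHomologyFunctorIso C i
  refine IsZero.of_epi_eq_zero ((homologyFunctor C i).map f) ?_
  rw [← cancel_epi (s.inv.app A), comp_zero]
  refine hU.def _ _ fun r ↦ ?_
  have h_nat : r ≫ s.inv.app A =
      s.inv.app U ≫ (homologyFunctor C i).map ((singleFunctor C i).map r) := s.inv.naturality r
  rw [comp_zero, ← assoc, h_nat, assoc, ← Functor.map_comp,
    h ((singleFunctor C i).map r ≫ f), Functor.map_zero, comp_zero]

end Triangles

section Tilting

variable {G : Type u} [Category.{v} G] [Abelian G] [HasDerivedCategory.{w} G]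
  {B : Type u₂} [Category.{v₂} B] [Abelian B] [HasDerivedCategory.{w₂} B]
  {F : DerivedCategory G ⥤ DerivedCategory B}

theorem eq_zero_of_forall_comp_single_map_eq_zero_of_obj_iso [F.IsEquivalence] {W I : G} {C D : B}
    (eW : F.obj ((singleFunctor G 0).obj W) ≅ (singleFunctor B 0).obj C)
    (hW : IsCoseparator W) [Injective I]
    (eD : F.obj ((singleFunctor G 0).obj I) ≅ (singleFunctor B 0).obj D)
    {Z : DerivedCategory B} (g : Z ⟶ (singleFunctor B 0).obj D)
    (hg : ∀ w : D ⟶ C, g ≫ (singleFunctor B 0).map w = 0) : g = 0 := by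
  let eZ := F.objObjPreimageIso Z
  let g' : F.objPreimage Z ⟶ (singleFunctor G 0).obj I := F.preimage (eZ.hom ≫ g ≫ eD.inv)
  have hg' : g' = 0 := eq_zero_of_forall_comp_single_map_eq_zero hW _ fun q ↦ by
    obtain ⟨w, hw⟩ := (singleFunctor B 0).map_surjective
      (eD.inv ≫ F.map ((singleFunctor G 0).map q) ≫ eW.hom)
    rw [← F.map_eq_zero_iff, F.map_comp, F.map_preimage, ← cancel_mono eW.hom, zero_comp, assoc,
      assoc, assoc, ← hw, hg w, comp_zero]
  have h_zero : eZ.hom ≫ g ≫ eD.inv = 0 :=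
    (F.map_preimage _).symm.trans (F.map_eq_zero_iff.2 hg')
  exact zero_of_comp_mono _ (zero_of_epi_comp _ h_zero)

theorem exists_lift_comp_eq_id_of_isCoseparator [F.IsEquivalence] {W I : G} {C D : B}
    (eW : F.obj ((singleFunctor G 0).obj W) ≅ (singleFunctor B 0).obj C)
    (hW : IsCoseparator W) [Injective I]
    (eD : F.obj ((singleFunctor G 0).obj I) ≅ (singleFunctor B 0).obj D)
    [HasProduct fun _ : D ⟶ C ↦ C] :
    ∃ r : (∏ᶜ fun _ : D ⟶ C ↦ C) ⟶ D, Pi.lift (fun w : D ⟶ C ↦ w) ≫ r = 𝟙 D := by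
  refine exists_comp_eq_id_of_forall_comp_single_map_eq_zero (i := 0) _ fun Z g hg ↦ ?_
  refine eq_zero_of_forall_comp_single_map_eq_zero_of_obj_iso eW hW eD g fun w ↦ ?_
  rw [← Pi.lift_π (fun w : D ⟶ C ↦ w) w, Functor.map_comp, ← assoc, hg, zero_comp]

theorem isGE_zero_of_obj_iso_single_pi [F.IsEquivalence] {W : G} [Injective W] {C : B}
    (eW : F.obj ((singleFunctor G 0).obj W) ≅ (singleFunctor B 0).obj C)
    {ι : Type t} [HasLimitsOfShape (Discrete ι) B]
    [HasExactLimitsOfShape (Discrete ι) B] [EnoughInjectives B] {Y : DerivedCategory G}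
    (eY : F.obj Y ≅ (singleFunctor B 0).obj (∏ᶜ fun _ : ι ↦ C)) : Y.IsGE 0 := by
  refine (isGE_iff _ _).2 fun i hi ↦ isZero_homology_of_forall_single_hom_eq_zero fun A ↦ ?_
  have h_zero (f : F.obj ((singleFunctor G i).obj A) ⟶ (singleFunctor B 0).obj C) : f = 0 :=
    (forall_hom_eq_zero_iff_of_obj_iso F (Iso.refl _) eW).1
      (hom_single_eq_zero_of_isZero_homology (isZero_homology_single hi.ne' A)) f
  exact (forall_hom_eq_zero_iff_of_obj_iso F (Iso.refl _) eY).2 fun f ↦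
    eq_zero_of_forall_comp_singleFunctor_map_π_eq_zero f fun j ↦ h_zero _

variable [F.CommShift ℤ]

/-- The isomorphism `F (T[-i]) ≅ U[-i]` obtained by shifting an isomorphism `F T ≅ U`, for a
functor `F` which commutes with shifts and objects `T` and `U` of the hearts. -/
noncomputable def objSingleIso {T : G} {U : B}
    (e : F.obj ((singleFunctor G 0).obj T) ≅ (singleFunctor B 0).obj U) (i : ℤ) :
    F.obj ((singleFunctor G i).obj T) ≅ (singleFunctor B i).obj U :=
  F.mapIso (((singleFunctors G).shiftIso (-i) i 0 (by simp)).app T).symm ≪≫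
    (F.commShiftIso (-i)).app _ ≪≫ (shiftFunctor _ (-i)).mapIso e ≪≫
    ((singleFunctors B).shiftIso (-i) i 0 (by simp)).app U

theorem subsingleton_ext_of_isZero_homology [F.IsEquivalence] [HasExt.{e} B] {W : G} [Injective W]
    {C M : B} (eW : F.obj ((singleFunctor G 0).obj W) ≅ (singleFunctor B 0).obj C)
    {Y : DerivedCategory G}
    (eY : F.obj Y ≅ (singleFunctor B 0).obj M) {j : ℕ}
    (h : IsZero ((homologyFunctor G (-j)).obj Y)) : Subsingleton (Abelian.Ext.{e} M C j) := by
  refine (subsingleton_ext_iff_forall_single_hom_eq_zero M C (k := -j) (i := 0) (by simp)).2 ?_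
  exact (forall_hom_eq_zero_iff_of_obj_iso F eY (objSingleIso eW (-j))).1
    (hom_single_eq_zero_of_isZero_homology h)

section Separator

variable [F.IsEquivalence] {T : G} {U : B}
  (e : F.obj ((singleFunctor G 0).obj T) ≅ (singleFunctor B 0).obj U) (hU : IsSeparator U)
include e hU

theorem isZero_homology_obj_of_forall_single_hom_eq_zero {Y : DerivedCategory G} {i : ℤ}
    (h : ∀ f : (singleFunctor G i).obj T ⟶ Y, f = 0) :
    IsZero ((homologyFunctor B i).obj (F.obj Y)) :=
  isZero_homology_of_isSeparator hU
    ((forall_hom_eq_zero_iff_of_obj_iso F (objSingleIso e i) (Iso.refl _)).1 h)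

theorem isGE_obj {Y : DerivedCategory G} {n : ℤ} (hY : Y.IsGE n) : (F.obj Y).IsGE n :=
  (isGE_iff _ _).2 fun i hi ↦ isZero_homology_obj_of_forall_single_hom_eq_zero e hU fun f ↦
    TStructure.t.zero_of_isLE_of_isGE f i n hi inferInstance hY

theorem InjDimNonpos.isLE_obj {Y : DerivedCategory G} (hY : InjDimNonpos Y) : (F.obj Y).IsLE 0 :=
  (isLE_iff _ _).2 fun _ hi ↦ isZero_homology_obj_of_forall_single_hom_eq_zero e hU (hY hi T)

theorem isZero_homology_obj_single_injective (I : G) [Injective I] {i : ℤ} (hi : i ≠ 0) :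
    IsZero ((homologyFunctor B i).obj (F.obj ((singleFunctor G 0).obj I))) :=
  isZero_homology_obj_of_forall_single_hom_eq_zero e hU
    (hom_single_eq_zero_of_isZero_homology (isZero_homology_single hi.symm T))

theorem injDimNonpos_of_obj_iso_single {Y : DerivedCategory G} {L : B} [Injective L]
    (eY : F.obj Y ≅ (singleFunctor B 0).obj L) : InjDimNonpos Y := fun i hi A ↦ by
  have : (F.obj ((singleFunctor G i).obj A)).IsGE i := isGE_obj e hU inferInstance
  exact (forall_hom_eq_zero_iff_of_obj_iso F (Iso.refl _) eY).2
    (hom_single_eq_zero_of_isZero_homology (isZero_of_isGE _ i 0 hi))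

theorem isLE_obj_single_of_ext_vanishing [HasExt.{t} G] [EnoughInjectives G] {n : ℕ}
    (hn : ∀ X : G, Subsingleton (Abelian.Ext.{t} T X (n + 1))) (A : G) (i : ℤ) :
    (F.obj ((singleFunctor G i).obj A)).IsLE (i + n) := by
  refine (isLE_iff _ _).2 fun k hk ↦ isZero_homology_obj_of_forall_single_hom_eq_zero e hU ?_
  obtain ⟨j, hnj, rfl⟩ : ∃ j : ℕ, n ≤ j ∧ k = i + (j + 1 : ℕ) :=
    ⟨(k - i - 1).toNat, by omega, by omega⟩
  exact (subsingleton_ext_iff_forall_single_hom_eq_zero T A rfl).1 (subsingleton_ext_of_le hnj hn A)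

theorem isGE_neg_of_isGE_obj [HasExt.{t} G] [EnoughInjectives G] {n : ℕ}
    (hn : ∀ X : G, Subsingleton (Abelian.Ext.{t} T X (n + 1))) {Y : DerivedCategory G}
    (hY : (F.obj Y).IsGE 0) : Y.IsGE (-n) := by
  refine (isGE_iff _ _).2 fun i hi ↦ isZero_homology_of_forall_single_hom_eq_zero fun A ↦ ?_
  have hA : (F.obj ((singleFunctor G i).obj A)).IsLE (i + n) :=
    isLE_obj_single_of_ext_vanishing e hU hn A i
  exact (forall_hom_eq_zero_iff_of_obj_iso F (Iso.refl _) (Iso.refl _)).2 fun f ↦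
    TStructure.t.zero_of_isLE_of_isGE f (i + n) 0 (by omega) hA hY

theorem exists_finiteCoresolution_of_isGE_obj [F.IsTriangulated] [EnoughInjectives G]
    {P : ObjectProperty B} {L : B}
    (hP : ∀ (I : G) (D : B), Injective I →
      Nonempty (F.obj ((singleFunctor G 0).obj I) ≅ (singleFunctor B 0).obj D) → P D)
    {m r : ℕ} {Y : DerivedCategory G} (hY : InjDimNonpos Y) (hYm : Y.IsGE (-m))
    (hFY : (F.obj Y).IsGE 0)
    (hL : FiniteCoresolution P L r ((homologyFunctor B 0).obj (F.obj Y))) :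
    ∃ r K, P K ∧ FiniteCoresolution P L r K := by
  induction m generalizing r Y with
  | zero =>
    have : Y.IsGE 0 := by simpa using hYm
    have := hY.isLE_obj e hU
    obtain ⟨I, hI, ⟨eI⟩⟩ := hY.exists_iso_single
    obtain ⟨eFY⟩ := nonempty_iso_single_homology (F.obj Y)
    exact ⟨r, _, hP I _ hI ⟨F.mapIso eI.symm ≪≫ eFY⟩, hL⟩
  | succ m ih =>
    obtain ⟨I, hI, Y', f, g, h, hT, hYm', hY'⟩ :=
      hY.exists_distTriang (-m) (by simp) (by convert hYm using 1; push_cast; ring)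
    have hFT := F.map_distinguished _ hT
    have hFI : (F.obj ((singleFunctor G 0).obj I)).IsGE 0 := isGE_obj e hU inferInstance
    have hFI' := (injDimNonpos_single I).isLE_obj e hU
    obtain ⟨eI⟩ := nonempty_iso_single_homology (F.obj ((singleFunctor G 0).obj I))
    have hFY' : (F.obj Y').IsGE 0 :=
      isGE_obj₁_of_distTriang hFT hFI (TStructure.t.isGE_of_ge (F.obj Y) (0 - 1) 0 (by simp))
    exact ih hY' hYm' hFY' (.splice
      (shortExact_homology_of_distTriang hFT (hY'.isLE_obj e hU) hFY) (hP I _ hI ⟨eI⟩) hL)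

end Separator

end Tilting

section Modules

theorem isSeparator_of_self (R : Type v₂) [Ring R] : IsSeparator (ModuleCat.of R R) := by
  refine (isSeparator_def _).2 fun X Y f g h ↦ ?_
  ext x
  simpa using ConcreteCategory.congr_hom
    (h (ModuleCat.ofHom (LinearMap.toSpanSingleton R X x))) (1 : R)

theorem injDimLE_of_subsingleton_ext {R : Type v₂} [Ring R] [HasExt.{e} (ModuleCat.{v₂} R)] {n : ℕ}
    {C : ModuleCat.{v₂} R}
    (h : ∀ M : ModuleCat.{v₂} R, Subsingleton (Abelian.Ext.{e} M C (n + 1))) :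
    InjDimLE C n := by
  obtain ⟨L, hL, hC⟩ := exists_injective_finiteCoresolution h
  obtain ⟨S, hS, h_zero, h_last, h_one, hP, rfl⟩ := hC.exists_exact
  refine ⟨S, hS, h_zero, h_last, ⟨eqToIso h_one⟩, fun i h₂ hi ↦ ?_⟩
  obtain hi | rfl := hi.lt_or_eq
  · exact hP i h₂ (by omega)
  · exact hL

end Modules

section Cotilting

variable {G : Type u} [Category.{v} G] [Abelian G] [HasDerivedCategory.{w} G]
  {R : Type v₂} [Ring R] [HasDerivedCategory.{w₂} (ModuleCat.{v₂} R)]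
  {F : DerivedCategory G ⥤ DerivedCategory (ModuleCat.{v₂} R)} [F.IsEquivalence]
  {T W : G} {C : ModuleCat.{v₂} R}

theorem inProdOf_of_obj_iso_single
    (eW : F.obj ((singleFunctor G 0).obj W) ≅ (singleFunctor _ 0).obj C) (hW : IsCoseparator W)
    {I : G} [Injective I] {D : ModuleCat.{v₂} R}
    (eD : F.obj ((singleFunctor G 0).obj I) ≅ (singleFunctor _ 0).obj D) : InProdOf C D := by
  obtain ⟨r, hr⟩ := exists_lift_comp_eq_id_of_isCoseparator eW hW eD
  exact ⟨D ⟶ C, _, r, hr⟩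

variable [F.CommShift ℤ]

theorem subsingleton_ext_pi_of_obj_iso_single [HasExt.{e} (ModuleCat.{v₂} R)] [Injective W]
    (eW : F.obj ((singleFunctor G 0).obj W) ≅ (singleFunctor _ 0).obj C) (ι : Type v₂) {j : ℕ}
    (hj : 0 < j) : Subsingleton (Abelian.Ext.{e} (∏ᶜ fun _ : ι ↦ C) C j) := by
  let eY := F.objObjPreimageIso ((singleFunctor (ModuleCat.{v₂} R) 0).obj (∏ᶜ fun _ : ι ↦ C))
  have hY := isGE_zero_of_obj_iso_single_pi eW eY
  exact subsingleton_ext_of_isZero_homology eW eY (isZero_of_isGE _ 0 _ (by omega))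

variable [EnoughInjectives G]

theorem injDimLE_of_obj_iso_single [HasExt.{t} G] [HasExt.{e} (ModuleCat.{v₂} R)] [Injective W]
    (eT : F.obj ((singleFunctor G 0).obj T) ≅ (singleFunctor _ 0).obj (ModuleCat.of R R))
    (eW : F.obj ((singleFunctor G 0).obj W) ≅ (singleFunctor _ 0).obj C) {n : ℕ}
    (hn : ∀ X : G, Subsingleton (Abelian.Ext.{t} T X (n + 1))) : InjDimLE C n := by
  refine injDimLE_of_subsingleton_ext.{e} fun M ↦ ?_
  let eY := F.objObjPreimageIso ((singleFunctor (ModuleCat.{v₂} R) 0).obj M)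
  have hY := isGE_neg_of_isGE_obj eT (isSeparator_of_self R) hn
    (TStructure.t.isGE_of_iso eY.symm 0)
  exact subsingleton_ext_of_isZero_homology eW eY (isZero_of_isGE _ (-n) _ (by push_cast; omega))

theorem exists_finiteCoresolution_inProdOf [F.IsTriangulated] [HasExt.{t} G]
    (eT : F.obj ((singleFunctor G 0).obj T) ≅ (singleFunctor _ 0).obj (ModuleCat.of R R))
    (eW : F.obj ((singleFunctor G 0).obj W) ≅ (singleFunctor _ 0).obj C) (hW : IsCoseparator W)
    {n : ℕ} (hn : ∀ X : G, Subsingleton (Abelian.Ext.{t} T X (n + 1)))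
    (L : ModuleCat.{v₂} R) [Injective L] :
    ∃ r K, InProdOf C K ∧ FiniteCoresolution (InProdOf C) L r K := by
  have hU := isSeparator_of_self R
  let eY := F.objObjPreimageIso ((singleFunctor (ModuleCat.{v₂} R) 0).obj L)
  have hFY := TStructure.t.isGE_of_iso eY.symm 0
  exact exists_finiteCoresolution_of_isGE_obj eT hU
    (fun I D _ ⟨eD⟩ ↦ inProdOf_of_obj_iso_single eW hW eD)
    (injDimNonpos_of_obj_iso_single eT hU eY) (isGE_neg_of_isGE_obj eT hU hn hFY) hFY
    (.of_iso ((homologyFunctor _ 0).mapIso eY ≪≫ (singleFunctorCompHomologyFunctorIso _ 0).app L))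

theorem isBigNCotilting_of_obj_iso_single [F.IsTriangulated] [HasExt.{t} G]
    [HasExt.{e} (ModuleCat.{v₂} R)] [Injective W]
    (eT : F.obj ((singleFunctor G 0).obj T) ≅ (singleFunctor _ 0).obj (ModuleCat.of R R))
    (eW : F.obj ((singleFunctor G 0).obj W) ≅ (singleFunctor _ 0).obj C) (hW : IsCoseparator W)
    {n : ℕ} (hn : ∀ X : G, Subsingleton (Abelian.Ext.{t} T X (n + 1))) :
    IsBigNCotilting.{e} n C := by
  refine ⟨injDimLE_of_obj_iso_single eT eW hn,
    fun ι j hj ↦ subsingleton_ext_pi_of_obj_iso_single eW ι hj, ?_⟩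
  obtain ⟨L, hL, hLc⟩ :=
    Abelian.has_injective_coseparator (ModuleCat.of R R) (isSeparator_of_self R)
  obtain ⟨r, K, hK, hLK⟩ := exists_finiteCoresolution_inProdOf eT eW hW hn L
  obtain ⟨S, hS, h_zero, h_last, rfl, hP, rfl⟩ := hLK.exists_exact
  refine ⟨r, S, hS, h_zero, h_last, fun i hi hir ↦ ?_, hL, hLc⟩
  obtain hi | rfl := hi.lt_or_eq
  · exact hP i hi hir
  · exact hK

end Cotilting

theorem enoughInjectives_of_AB5 (G : Type u) [Category.{v} G] [Abelian G] [HasFilteredColimits G]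
    [AB5 G] [HasSeparator G] : EnoughInjectives G := by
  have : HasCoproducts.{v} G := hasCoproducts_of_finite_and_filtered
  have : HasColimits G := has_colimits_of_hasCoequalizers_and_coproducts
  have : IsGrothendieckAbelian.{v} G := { }
  infer_instance

theorem statement1_general (G : Type u) [Category.{v} G] [Abelian G] [EnoughInjectives G]
    [HasDerivedCategory.{w} G] [HasExt.{t} G]
    (T W : G) (hWinj : Injective W) (hWcogen : IsCoseparator W)
    (R : Type v₂) [Ring R]
    [HasDerivedCategory.{w₂} (ModuleCat.{v₂} R)] [HasExt.{e} (ModuleCat.{v₂} R)]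
    (E : TriangleEquivalenceData (DerivedCategory G) (DerivedCategory (ModuleCat.{v₂} R)))
    (hE : Nonempty (E.functor.obj ((singleFunctor G 0).obj T)
        ≅ (singleFunctor (ModuleCat.{v₂} R) 0).obj (ModuleCat.of R R))) :
    (∀ i : ℤ, i ≠ 0 →
      IsZero ((homologyFunctor (ModuleCat.{v₂} R) i).obj
        (E.functor.obj ((singleFunctor G 0).obj W)))) ∧
    (∃ C : ModuleCat.{v₂} R,
      Nonempty (E.functor.obj ((singleFunctor G 0).obj W)
        ≅ (singleFunctor (ModuleCat.{v₂} R) 0).obj C)) ∧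
    (∀ n : ℕ, (∀ X : G, Subsingleton (Abelian.Ext T X (n + 1))) →
      ∀ C : ModuleCat.{v₂} R,
        Nonempty (E.functor.obj ((singleFunctor G 0).obj W)
          ≅ (singleFunctor (ModuleCat.{v₂} R) 0).obj C) →
        IsBigNCotilting n C) := by
  obtain ⟨eT⟩ := hE
  let := E.commShift
  have := E.isTriangulated
  have := E.isEquivalence
  have hU := isSeparator_of_self R
  have hFW := (injDimNonpos_single W).isLE_obj eT hU
  have hFW' : (E.functor.obj ((singleFunctor G 0).obj W)).IsGE 0 :=
    isGE_obj eT hU inferInstance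
  exact ⟨fun i hi ↦ isZero_homology_obj_single_injective eT hU W hi,
    ⟨_, nonempty_iso_single_homology _⟩,
    fun n hn C ⟨eW⟩ ↦ isBigNCotilting_of_obj_iso_single eT eW hWcogen hn⟩

end BigCotilting

open BigCotilting

theorem statement1 (G : Type u) [Category.{v} G] [Abelian G]
    [HasFilteredColimits G] [AB5 G] [HasSeparator G]
    [HasDerivedCategory.{w} G] [HasExt.{w} G]
    (T W : G) (hWinj : Injective W) (hWcogen : IsCoseparator W)
    (R : Type v₂) [Ring R]
    [HasDerivedCategory.{w₂} (ModuleCat.{v₂} R)] [HasExt.{e} (ModuleCat.{v₂} R)]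
    (E : TriangleEquivalenceData (DerivedCategory G) (DerivedCategory (ModuleCat.{v₂} R)))
    (hE : Nonempty (E.functor.obj ((singleFunctor G 0).obj T)
        ≅ (singleFunctor (ModuleCat.{v₂} R) 0).obj (ModuleCat.of R R))) :
    (∀ i : ℤ, i ≠ 0 →
      IsZero ((homologyFunctor (ModuleCat.{v₂} R) i).obj
        (E.functor.obj ((singleFunctor G 0).obj W)))) ∧
    (∃ C : ModuleCat.{v₂} R,
      Nonempty (E.functor.obj ((singleFunctor G 0).obj W)
        ≅ (singleFunctor (ModuleCat.{v₂} R) 0).obj C)) ∧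
    (∀ n : ℕ, (∀ X : G, Subsingleton (Abelian.Ext T X (n + 1))) →
      ∀ C : ModuleCat.{v₂} R,
        Nonempty (E.functor.obj ((singleFunctor G 0).obj W)
          ≅ (singleFunctor (ModuleCat.{v₂} R) 0).obj C) →
        IsBigNCotilting n C) := by
  have := enoughInjectives_of_AB5 G
  exact statement1_general G T W hWinj hWcogen R E hE
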